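/- arXiv:1510.01413 — 3 statements merged into one kernel-verified Lean document; each statement's English description precedes it below -/
import Mathlib

section
/- For every δ > 1/2 and σ > 0, the function F(τ) = (τ/2)(δ − 1/2) + σ²/(2τ) + (τ/2)∫_{2/τ}^∞ (h − 2/τ)² p(h) dh is strictly convex on (0,∞). -/
open MeasureTheory Set

/-- The standard normal density `p(h) = (1/√(2π)) e^{−h²/2}`. -/
noncomputable def gaussPDF (h : ℝ) : ℝ := (Real.sqrt (2 * Real.pi))⁻¹ * Real.exp (-(h ^ 2) / 2)

/-- The objective function
`F(τ) = (τ/2)(δ − 1/2) + σ²/(2τ) + (τ/2)∫_{2/τ}^∞ (h − 2/τ)² p(h) dh`. -/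
noncomputable def Fobj (δ σ τ : ℝ) : ℝ :=
  τ / 2 * (δ - 1 / 2) + σ ^ 2 / (2 * τ)
    + τ / 2 * ∫ h in Set.Ioi (2 / τ), (h - 2 / τ) ^ 2 * gaussPDF h


lemma integrable_aux (c : ℝ) : Integrable (fun h : ℝ => (h - c) ^ 2 * gaussPDF h) := by
  have h2 := integrable_rpow_mul_exp_neg_mul_sq (b := 1/2) (by norm_num) (s := 2) (by norm_num)
  have h1 := integrable_mul_exp_neg_mul_sq (b := 1/2) (by norm_num)
  have h0 := integrable_exp_neg_mul_sq (b := 1/2) (by norm_num)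
  have := ((h2.add (h1.const_mul (-2 * c))).add (h0.const_mul (c ^ 2))).const_mul
    ((Real.sqrt (2 * Real.pi))⁻¹)
  refine this.congr (Filter.Eventually.of_forall fun h => ?_)
  have e : -(h ^ 2) / 2 = -(1/2) * h ^ 2 := by ring
  simp only [gaussPDF, Pi.add_apply, e, Real.rpow_two]
  ring

/-- The truncated integrand. -/
noncomputable def auxM (τ h : ℝ) : ℝ := max (h - 2 / τ) 0

lemma aux_eq (τ : ℝ) : (fun h : ℝ => auxM τ h ^ 2 * gaussPDF h) =
    (Ioi (2 / τ)).indicator (fun h => (h - 2 / τ) ^ 2 * gaussPDF h) := by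
  ext h
  by_cases hh : 2 / τ < h
  · rw [indicator_of_mem (by exact hh), auxM, max_eq_left (by linarith)]
  · rw [indicator_of_notMem (by exact hh), auxM, max_eq_right (by linarith)]
    ring

lemma aux_integrable (τ : ℝ) : Integrable (fun h : ℝ => auxM τ h ^ 2 * gaussPDF h) := by
  rw [aux_eq]
  exact (integrable_aux _).indicator measurableSet_Ioi

lemma aux_integral (τ : ℝ) : ∫ h in Ioi (2 / τ), (h - 2 / τ) ^ 2 * gaussPDF h =
    ∫ h, auxM τ h ^ 2 * gaussPDF h := by
  rw [aux_eq, integral_indicator measurableSet_Ioi]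

lemma aux_pointwise {x y a b : ℝ} (hx : 0 < x) (hy : 0 < y) (ha : 0 < a) (hb : 0 < b)
    (hab : a + b = 1) (h : ℝ) :
    (a * x + b * y) * auxM (a * x + b * y) h ^ 2 ≤
      a * x * auxM x h ^ 2 + b * y * auxM y h ^ 2 := by
  have hz : 0 < a * x + b * y := by positivity
  have m0 : ∀ t, 0 ≤ auxM t h := fun t => le_max_right _ _
  have ml : ∀ t, 0 < t → t * h - 2 ≤ t * auxM t h := fun t ht => by
    have : h - 2 / t ≤ auxM t h := le_max_left _ _
    have := mul_le_mul_of_nonneg_left this ht.le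
    have e : t * (h - 2 / t) = t * h - 2 := by field_simp
    linarith
  have key : (a * x + b * y) * auxM (a * x + b * y) h ≤ a * (x * auxM x h) + b * (y * auxM y h) := by
    rcases le_total (h - 2 / (a * x + b * y)) 0 with h1 | h1
    · have : auxM (a * x + b * y) h = 0 := max_eq_right h1
      rw [this, mul_zero]
      have := m0 x
      have := m0 y
      positivity
    · have : auxM (a * x + b * y) h = h - 2 / (a * x + b * y) := max_eq_left h1
      rw [this]
      have e : (a * x + b * y) * (h - 2 / (a * x + b * y)) = (a * x + b * y) * h - 2 := by
        field_simp
      rw [e]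
      have := mul_le_mul_of_nonneg_left (ml x hx) ha.le
      have := mul_le_mul_of_nonneg_left (ml y hy) hb.le
      have : (2:ℝ) = a * 2 + b * 2 := by rw [← add_mul, hab, one_mul]
      linarith
  have hm := m0 x
  have hn := m0 y
  have hw := m0 (a * x + b * y)
  generalize auxM x h = m at *
  generalize auxM y h = n at *
  generalize auxM (a * x + b * y) h = w at *
  have sq := pow_le_pow_left₀ (by positivity) key 2
  have cs : (a * (x * m) + b * (y * n)) ^ 2 ≤ (a * x + b * y) * (a * x * m ^ 2 + b * y * n ^ 2) := by
    have : 0 ≤ (a * x) * (b * y) * (m - n) ^ 2 := by positivity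
    nlinarith
  refine le_of_mul_le_mul_left ?_ hz
  nlinarith

lemma aux_inv {x y a b : ℝ} (hx : 0 < x) (hy : 0 < y) (ha : 0 < a) (hb : 0 < b)
    (hab : a + b = 1) (hxy : x ≠ y) : 1 / (a * x + b * y) < a * (1 / x) + b * (1 / y) := by
  have e : a * (1 / x) + b * (1 / y) = (a * y + b * x) / (x * y) := by field_simp
  rw [e, div_lt_div_iff₀ (by positivity) (by positivity)]
  have h1 : 0 < (x - y) ^ 2 := by have := sub_ne_zero.2 hxy; positivity
  have h2 : 0 < a * b * (x - y) ^ 2 := by positivity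
  have hb' : b = 1 - a := by linarith
  subst hb'
  nlinarith

/-- For every `δ > 1/2` and `σ > 0`, the function `F` is strictly convex on `(0,∞)`. -/
theorem strictConvexOn_Fobj (δ σ : ℝ) (hδ : 1 / 2 < δ) (hσ : 0 < σ) :
    StrictConvexOn ℝ (Set.Ioi (0 : ℝ)) (Fobj δ σ) := by
  refine ⟨convex_Ioi 0, ?_⟩
  intro x hx y hy hxy a b ha hb hab
  have hx : 0 < x := hx
  have hy : 0 < y := hy
  simp only [smul_eq_mul, Fobj, aux_integral]
  have hint : (a * x + b * y) * ∫ h, auxM (a * x + b * y) h ^ 2 * gaussPDF h ≤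
      a * x * (∫ h, auxM x h ^ 2 * gaussPDF h) + b * y * ∫ h, auxM y h ^ 2 * gaussPDF h := by
    rw [← integral_const_mul, ← integral_const_mul, ← integral_const_mul,
      ← integral_add ((aux_integrable x).const_mul _) ((aux_integrable y).const_mul _)]
    refine integral_mono ((aux_integrable _).const_mul _)
      (((aux_integrable x).const_mul _).add ((aux_integrable y).const_mul _)) fun h => ?_
    have hp : 0 ≤ gaussPDF h := by unfold gaussPDF; positivity
    have := mul_le_mul_of_nonneg_right (aux_pointwise hx hy ha hb hab h) hp
    simp only [Pi.add_apply]
    linarith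
  have hs := mul_lt_mul_of_pos_left (aux_inv hx hy ha hb hab hxy) (show 0 < σ ^ 2 / 2 by positivity)
  have e : ∀ t : ℝ, σ ^ 2 / (2 * t) = σ ^ 2 / 2 * (1 / t) := fun t => by
    rw [div_mul_div_comm, mul_one]
  rw [e, e, e]
  linarith
end

section
/- For every δ > 1/2 and σ > 0, the function F attains its infimum over (0,∞), and the minimizer τ_* ∈ (0,∞) is unique; in particular F(τ) → ∞ both as τ → 0⁺ and as τ → ∞. -/
open MeasureTheory Set Filter

lemma persp_aux (h x y a b : ℝ) (hx : 0 < x) (hy : 0 < y) (ha : 0 ≤ a) (hb : 0 ≤ b)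
    (hab : a + b = 1) :
    (max ((a * x + b * y) * h - 2) 0) ^ 2 / (a * x + b * y)
      ≤ a * ((max (x * h - 2) 0) ^ 2 / x) + b * ((max (y * h - 2) 0) ^ 2 / y) := by
  set u := max (x * h - 2) 0 with hu
  set v := max (y * h - 2) 0 with hv
  have hu0 : 0 ≤ u := le_max_right _ _
  have hv0 : 0 ≤ v := le_max_right _ _
  have hu1 : x * h - 2 ≤ u := le_max_left _ _
  have hv1 : y * h - 2 ≤ v := le_max_left _ _
  have hz : 0 < a * x + b * y := by
    rcases ha.eq_or_lt with rfl | ha'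
    · have : b = 1 := by linarith
      subst this; linarith
    · have := mul_pos ha' hx
      have := mul_nonneg hb hy.le
      linarith
  have hm : max ((a * x + b * y) * h - 2) 0 ≤ a * u + b * v := by
    apply max_le
    · have h1 := mul_le_mul_of_nonneg_left hu1 ha
      have h2 := mul_le_mul_of_nonneg_left hv1 hb
      have : (a * x + b * y) * h - 2 = a * (x * h - 2) + b * (y * h - 2) := by
        linear_combination (2 : ℝ) * hab
      linarith
    · positivity
  have hm2 : (max ((a * x + b * y) * h - 2) 0) ^ 2 ≤ (a * u + b * v) ^ 2 :=
    pow_le_pow_left₀ (le_max_right _ _) hm 2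
  rw [div_le_iff₀ hz]
  refine hm2.trans ?_
  have key : (a * (u ^ 2 / x) + b * (v ^ 2 / y)) * (a * x + b * y) - (a * u + b * v) ^ 2
      = a * b * ((u * y - v * x) ^ 2 / (x * y)) := by
    field_simp
    ring
  have : 0 ≤ a * b * ((u * y - v * x) ^ 2 / (x * y)) := by positivity
  linarith

lemma gaussPDF_nonneg (h : ℝ) : 0 ≤ gaussPDF h := by
  unfold gaussPDF; positivity

lemma gaussPDF_cont : Continuous gaussPDF := by
  unfold gaussPDF; fun_prop

lemma integrable_sq_gauss : Integrable (fun h : ℝ => h ^ 2 * gaussPDF h) := by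
  have h1 := integrable_rpow_mul_exp_neg_mul_sq (b := 1 / 2) (by norm_num) (s := 2) (by norm_num)
  have h2 := h1.const_mul ((Real.sqrt (2 * Real.pi))⁻¹)
  refine h2.congr (ae_of_all _ fun h => ?_)
  simp only [gaussPDF, Real.rpow_two]
  rw [show -(1 / 2 : ℝ) * h ^ 2 = -(h ^ 2) / 2 by ring]
  ring

/-- The integrand in perspective form. -/
noncomputable def kk (τ h : ℝ) : ℝ := (max (τ * h - 2) 0) ^ 2 / τ * gaussPDF h

lemma kk_integrable (τ : ℝ) (hτ : 0 < τ) : Integrable (kk τ) := by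
  refine (integrable_sq_gauss.const_mul τ).mono' ?_ (ae_of_all _ fun h => ?_)
  · apply Continuous.aestronglyMeasurable
    have := gaussPDF_cont
    unfold kk; fun_prop
  · have hp := gaussPDF_nonneg h
    have : 0 ≤ kk τ h := by unfold kk; positivity
    rw [Real.norm_of_nonneg this]
    unfold kk
    rw [← mul_assoc]
    refine mul_le_mul_of_nonneg_right ?_ hp
    rw [div_le_iff₀ hτ]
    rcases le_total (τ * h - 2) 0 with h0 | h0
    · rw [max_eq_right h0]; nlinarith [mul_nonneg hτ.le hτ.le, sq_nonneg (τ * h)]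
    · rw [max_eq_left h0]; nlinarith

lemma Fobj_eq (δ σ τ : ℝ) (hτ : 0 < τ) :
    Fobj δ σ τ = τ / 2 * (δ - 1 / 2) + σ ^ 2 / 2 * τ⁻¹ + 1 / 2 * ∫ h, kk τ h := by
  have : (∫ h, kk τ h) = τ * ∫ h in Set.Ioi (2 / τ), (h - 2 / τ) ^ 2 * gaussPDF h := by
    rw [← integral_const_mul, ← integral_indicator measurableSet_Ioi]
    congr 1
    ext h
    unfold kk
    by_cases hh : 2 / τ < h
    · rw [indicator_of_mem (by exact hh)]
      have : 2 < h * τ := (div_lt_iff₀ hτ).1 hh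
      rw [max_eq_left (by linarith)]
      field_simp
    · rw [indicator_of_notMem (by exact hh)]
      have : h * τ ≤ 2 := (le_div_iff₀ hτ).1 (not_lt.1 hh)
      rw [max_eq_right (by linarith)]
      simp
  rw [this, Fobj]
  field_simp

lemma int_nonneg (τ : ℝ) (hτ : 0 < τ) : 0 ≤ ∫ h, kk τ h := by
  refine integral_nonneg fun h => ?_
  have := gaussPDF_nonneg h
  simp only [Pi.zero_apply, kk]; positivity

lemma int_convex : ConvexOn ℝ (Ioi (0 : ℝ)) (fun τ => ∫ h, kk τ h) := by
  refine ⟨convex_Ioi 0, fun x hx y hy a b ha hb hab => ?_⟩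
  have hz : a • x + b • y ∈ Ioi (0 : ℝ) := convex_Ioi 0 hx hy ha hb hab
  simp only [smul_eq_mul] at hz ⊢
  rw [← integral_const_mul, ← integral_const_mul,
    ← integral_add ((kk_integrable x hx).const_mul a) ((kk_integrable y hy).const_mul b)]
  refine integral_mono (kk_integrable _ hz)
    (((kk_integrable x hx).const_mul a).add ((kk_integrable y hy).const_mul b)) fun h => ?_
  have := mul_le_mul_of_nonneg_right (persp_aux h x y a b hx hy ha hb hab) (gaussPDF_nonneg h)
  simp only [kk]
  linarith

lemma inv_strict : StrictConvexOn ℝ (Ioi (0 : ℝ)) (fun τ : ℝ => τ⁻¹) := by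
  simpa using strictConvexOn_zpow (m := -1) (by norm_num) (by norm_num)

lemma Fobj_strict (δ σ : ℝ) (hσ : 0 < σ) : StrictConvexOn ℝ (Ioi (0 : ℝ)) (Fobj δ σ) := by
  refine ⟨convex_Ioi 0, fun x hx y hy hxy a b ha hb hab => ?_⟩
  have hz : a • x + b • y ∈ Ioi (0 : ℝ) := convex_Ioi 0 hx hy ha.le hb.le hab
  rw [Fobj_eq _ _ _ hx, Fobj_eq _ _ _ hy, Fobj_eq _ _ _ hz]
  have h1 := int_convex.2 hx hy ha.le hb.le hab
  have h2 := inv_strict.2 hx hy hxy ha hb hab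
  have h3 := mul_lt_mul_of_pos_left h2 (show 0 < σ ^ 2 / 2 by positivity)
  simp only [smul_eq_mul] at *
  linarith

theorem Fobj_exists_unique_minimizer (δ σ : ℝ) (hδ : 1 / 2 < δ) (hσ : 0 < σ) :
    (∃ τs ∈ Set.Ioi (0 : ℝ), IsMinOn (Fobj δ σ) (Set.Ioi (0 : ℝ)) τs ∧
      ∀ τ ∈ Set.Ioi (0 : ℝ), IsMinOn (Fobj δ σ) (Set.Ioi (0 : ℝ)) τ → τ = τs) ∧
    Tendsto (Fobj δ σ) (nhdsWithin 0 (Set.Ioi (0 : ℝ))) atTop ∧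
    Tendsto (Fobj δ σ) atTop atTop := by
  have hs := Fobj_strict δ σ hσ
  have hcont : ContinuousOn (Fobj δ σ) (Ioi 0) := hs.convexOn.continuousOn isOpen_Ioi
  have hc : 0 < (δ - 1 / 2) / 2 := by linarith
  have t0 : Tendsto (Fobj δ σ) (nhdsWithin 0 (Set.Ioi (0 : ℝ))) atTop := by
    refine tendsto_atTop_mono' _ ?_
      (tendsto_inv_nhdsGT_zero.const_mul_atTop (show 0 < σ ^ 2 / 2 by positivity))
    filter_upwards [self_mem_nhdsWithin] with τ hτ
    rw [Fobj_eq _ _ _ hτ]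
    have := int_nonneg τ hτ
    have := mul_pos hc (mem_Ioi.1 hτ)
    linarith
  have t1 : Tendsto (Fobj δ σ) atTop atTop := by
    refine tendsto_atTop_mono' _ ?_ (tendsto_id.const_mul_atTop hc)
    filter_upwards [eventually_gt_atTop 0] with τ hτ
    rw [Fobj_eq _ _ _ hτ]
    have := int_nonneg τ hτ
    have : 0 < σ ^ 2 / 2 * τ⁻¹ := by positivity
    simp only [id]
    linarith
  refine ⟨?_, t0, t1⟩
  obtain ⟨a, ha, ha'⟩ := mem_nhdsGT_iff_exists_Ioo_subset.1 (t0.eventually_ge_atTop (Fobj δ σ 1))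
  obtain ⟨b, hb⟩ := eventually_atTop.1 (t1.eventually_ge_atTop (Fobj δ σ 1))
  have ha : 0 < a := ha
  have hK : Icc (min a 1) (max b 1) ⊆ Ioi (0 : ℝ) := fun x hx =>
    lt_of_lt_of_le (lt_min ha one_pos) hx.1
  have h1K : (1 : ℝ) ∈ Icc (min a 1) (max b 1) := ⟨min_le_right _ _, le_max_right _ _⟩
  obtain ⟨m, hm, hmin⟩ := isCompact_Icc.exists_isMinOn ⟨1, h1K⟩ (hcont.mono hK)
  have hM : IsMinOn (Fobj δ σ) (Ioi 0) m := by
    intro x hx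
    have hm1 : Fobj δ σ m ≤ Fobj δ σ 1 := hmin h1K
    show Fobj δ σ m ≤ Fobj δ σ x
    by_cases h1 : x < min a 1
    · exact hm1.trans (ha' ⟨hx, h1.trans_le (min_le_left _ _)⟩)
    · by_cases h2 : max b 1 < x
      · exact hm1.trans (hb x ((le_max_left _ _).trans h2.le))
      · exact hmin ⟨not_lt.1 h1, not_lt.1 h2⟩
  exact ⟨m, hK hm, hM, fun τ hτ hτm => hs.eq_of_isMinOn hτm hM hτ (hK hm)⟩
end

section
/- Fix δ > 1/2 and for each σ > 0 let τ_*(σ) denote the unique minimizer of F over (0,∞). Then in the high-SNR limit, τ_*(σ) is asymptotic to σ/√(δ − 1/2); precisely, lim_{σ→0⁺} τ_*(σ) · √(δ − 1/2) / σ = 1. -/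
open MeasureTheory Set Filter

lemma cube_gauss_integrable : Integrable (fun h : ℝ => h ^ 3 * gaussPDF h) := by
  have h1 := integrable_rpow_mul_exp_neg_mul_sq (b := 1 / 2) (by norm_num) (s := 3) (by norm_num)
  refine (h1.const_mul (Real.sqrt (2 * Real.pi))⁻¹).congr ?_
  refine Eventually.of_forall fun h => ?_
  have e : h ^ (3 : ℝ) = h ^ 3 := by
    rw [← Real.rpow_natCast]; norm_num
  simp only [gaussPDF]
  rw [e, show -(1 / 2 : ℝ) * h ^ 2 = -(h ^ 2) / 2 by ring]
  ring

lemma tail_nonneg (t : ℝ) : 0 ≤ ∫ h in Set.Ioi t, (h - t) ^ 2 * gaussPDF h :=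
  integral_nonneg fun h => mul_nonneg (sq_nonneg _) (gaussPDF_nonneg h)

lemma tail_le (t : ℝ) (ht : 0 < t) : ∫ h in Set.Ioi t, (h - t) ^ 2 * gaussPDF h
    ≤ t⁻¹ * ∫ h in Set.Ioi (0 : ℝ), h ^ 3 * gaussPDF h := by
  have h2 : ∫ h in Set.Ioi t, h ^ 3 * gaussPDF h ≤ ∫ h in Set.Ioi (0 : ℝ), h ^ 3 * gaussPDF h := by
    refine setIntegral_mono_set cube_gauss_integrable.integrableOn ?_ ?_
    · filter_upwards [ae_restrict_mem measurableSet_Ioi] with h hh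
      exact mul_nonneg (pow_nonneg (le_of_lt hh) _) (gaussPDF_nonneg h)
    · exact (Set.Ioi_subset_Ioi ht.le).eventuallyLE
  refine le_trans ?_ (mul_le_mul_of_nonneg_left h2 (inv_nonneg.2 ht.le))
  rw [← integral_const_mul]
  refine integral_mono_of_nonneg ?_ ((cube_gauss_integrable.const_mul _).integrableOn) ?_
  · exact Eventually.of_forall fun h => mul_nonneg (sq_nonneg _) (gaussPDF_nonneg h)
  · filter_upwards [ae_restrict_mem measurableSet_Ioi] with h hh
    have hh : t < h := hh
    rw [← mul_assoc]
    refine mul_le_mul_of_nonneg_right ?_ (gaussPDF_nonneg h)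
    rw [inv_mul_eq_div, le_div_iff₀ ht]
    have a1 : (h - t) ^ 2 ≤ h ^ 2 := by nlinarith
    have a2 : (h - t) ^ 2 * t ≤ h ^ 2 * h := mul_le_mul a1 hh.le ht.le (sq_nonneg _)
    linarith [pow_succ h 2]

/-- Fix `δ > 1/2` and for each `σ > 0` let `τ_*(σ)` be the unique minimizer of `F` over
`(0,∞)`.  Then in the high-SNR limit `σ → 0⁺` one has `τ_*(σ) ~ σ/√(δ − 1/2)`, i.e.
`τ_*(σ)·√(δ − 1/2)/σ → 1`. -/
theorem Fobj_minimizer_high_SNR (δ : ℝ) (hδ : 1 / 2 < δ)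
    (τs : ℝ → ℝ)
    (hτs_pos : ∀ σ : ℝ, 0 < σ → 0 < τs σ)
    (hτs_min : ∀ σ : ℝ, 0 < σ → IsMinOn (Fobj δ σ) (Set.Ioi (0 : ℝ)) (τs σ))
    (hτs_uniq : ∀ σ : ℝ, 0 < σ → ∀ τ ∈ Set.Ioi (0 : ℝ),
      IsMinOn (Fobj δ σ) (Set.Ioi (0 : ℝ)) τ → τ = τs σ) :
    Tendsto (fun σ : ℝ => τs σ * Real.sqrt (δ - 1 / 2) / σ)
      (nhdsWithin 0 (Set.Ioi (0 : ℝ))) (nhds 1) := by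
  set r := Real.sqrt (δ - 1 / 2) with hr
  have hr0 : 0 < r := Real.sqrt_pos.2 (by linarith)
  have hr2 : δ - 1 / 2 = r ^ 2 := (Real.sq_sqrt (by linarith)).symm
  set C := ∫ h in Set.Ioi (0 : ℝ), h ^ 3 * gaussPDF h with hC
  have key : ∀ σ : ℝ, 0 < σ → |τs σ * r / σ - 1| ≤
      Real.sqrt ((C * σ / (2 * r ^ 3)) * (2 + C * σ / (2 * r ^ 3))) := by
    intro σ hσ
    have hτ := hτs_pos σ hσ
    have hm : Fobj δ σ (τs σ) ≤ Fobj δ σ (σ / r) :=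
      hτs_min σ hσ (show σ / r ∈ Set.Ioi (0 : ℝ) from div_pos hσ hr0)
    set T := τs σ with hT
    set x := T * r / σ with hx
    set ε := C * σ / (2 * r ^ 3) with hε
    have hx0 : 0 < x := by positivity
    have hTx : T = x * σ / r := by rw [hx]; field_simp
    unfold Fobj at hm
    rw [hr2] at hm
    have g1 := tail_nonneg (2 / T)
    have g2 := tail_le (2 / (σ / r)) (by positivity)
    have g3 := tail_nonneg (2 / (σ / r))
    rw [← hC] at g2
    generalize (∫ h in Set.Ioi (2 / T), (h - 2 / T) ^ 2 * gaussPDF h) = A at hm g1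
    generalize (∫ h in Set.Ioi (2 / (σ / r)), (h - 2 / (σ / r)) ^ 2 * gaussPDF h) = B at hm g2 g3
    have g4 : B ≤ ε * r ^ 2 := by
      refine g2.trans (le_of_eq ?_)
      rw [hε]; field_simp
    have hε0 : 0 ≤ ε := by
      by_contra hn
      have : ε * r ^ 2 < 0 := mul_neg_of_neg_of_pos (not_le.1 hn) (by positivity)
      linarith
    have hm1 : T / 2 * r ^ 2 + σ ^ 2 / (2 * T) ≤
        σ / r / 2 * r ^ 2 + σ ^ 2 / (2 * (σ / r)) + σ / r / 2 * (ε * r ^ 2) := by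
      have : σ / r / 2 * B ≤ σ / r / 2 * (ε * r ^ 2) :=
        mul_le_mul_of_nonneg_left g4 (by positivity)
      have : 0 ≤ T / 2 * A := by positivity
      linarith
    have e1 : T / 2 * r ^ 2 + σ ^ 2 / (2 * T) = (σ * r / 2) * (x + 1 / x) := by
      rw [hTx]; field_simp
    have e2 : σ / r / 2 * r ^ 2 + σ ^ 2 / (2 * (σ / r)) + σ / r / 2 * (ε * r ^ 2)
        = (σ * r / 2) * (2 + ε) := by
      field_simp; ring
    rw [e1, e2] at hm1
    have hm2 : x + 1 / x ≤ 2 + ε := le_of_mul_le_mul_left hm1 (by positivity)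
    have hx1 : 0 < 1 / x := by positivity
    have hm3 : (x - 1) ^ 2 ≤ ε * x := by
      have := mul_le_mul_of_nonneg_right hm2 hx0.le
      rw [add_mul, one_div, inv_mul_cancel₀ hx0.ne'] at this
      nlinarith
    apply Real.abs_le_sqrt
    refine hm3.trans (mul_le_mul_of_nonneg_left (by linarith) hε0)
  rw [tendsto_iff_norm_sub_tendsto_zero]
  have hlim : Tendsto (fun σ : ℝ => Real.sqrt ((C * σ / (2 * r ^ 3)) * (2 + C * σ / (2 * r ^ 3))))
      (nhdsWithin 0 (Set.Ioi (0 : ℝ))) (nhds 0) := by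
    have hc : Continuous (fun σ : ℝ =>
        Real.sqrt ((C * σ / (2 * r ^ 3)) * (2 + C * σ / (2 * r ^ 3)))) := by fun_prop
    have := hc.tendsto 0
    simp only [mul_zero, zero_div, zero_mul, Real.sqrt_zero] at this
    exact this.mono_left nhdsWithin_le_nhds
  refine squeeze_zero' (Eventually.of_forall fun _ => norm_nonneg _) ?_ hlim
  filter_upwards [self_mem_nhdsWithin] with σ hσ
  rw [Real.norm_eq_abs]
  exact key σ hσ
end
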